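/- Soundness of the MaxCUCL termination criterion (Part 3 of Theorem 1): suppose the edge relation E is strongly connected, and suppose there is a time window [k_0, k_0 + L) with L ≥ 1 such that (i) for every edge (j,i) ∈ E there exists k with k_0 ≤ k < k_0 + L and w_k(j,i) = true, and (ii) no node's state changes during the window, i.e., x_k(j) = x_{k_0}(j) for all k_0 ≤ k ≤ k_0 + L and all j ∈ V. Then x_{k_0}(j) = q_m for every node j, where q_m = max_{i∈V} x_0(i). -/

import Mathlib

/-!
Transmissions only ever raise a state and never push one above the initial maximum, so `x` is
monotone in time and a window with equal end states is constant throughout. Each transmission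
`i → j` in such a window therefore forces `x k₀ i ≤ x k₀ j`, and strong connectivity chains these
inequalities between all pairs of nodes. Hence every state at `k₀` dominates all of `x k₀`, and
with it all of `x 0`.
-/

/-- Max-consensus over time-varying links: `A k j i` says that `i` transmits successfully to `j`
at step `k` (for a network `E` with drop pattern `w`, that `E j i` and `w k j i = true`). The
maximum is encoded as a least upper bound, so that infinite networks and arbitrary preorders of
states are allowed. -/
def IsMaxConsensus {V α : Type*} [Preorder α] (A : ℕ → V → V → Prop) (x : ℕ → V → α) : Prop :=
  ∀ k j, IsLUB (x k '' insert j {i | A k j i}) (x (k + 1) j)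

namespace IsMaxConsensus

variable {V α : Type*} [Preorder α] {A : ℕ → V → V → Prop} {x : ℕ → V → α}

theorem le_succ_of_link (hx : IsMaxConsensus A x) {k : ℕ} {i j : V} (hij : A k j i) :
    x k i ≤ x (k + 1) j :=
  (hx k j).1 (Set.mem_image_of_mem _ (Set.mem_insert_of_mem _ hij))

protected theorem monotone (hx : IsMaxConsensus A x) : Monotone x :=
  monotone_nat_of_le_succ fun k j => (hx k j).1 (Set.mem_image_of_mem _ (Set.mem_insert _ _))

theorem le_of_forall_initial_le (hx : IsMaxConsensus A x) {b : α} (hb : ∀ i, x 0 i ≤ b)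
    (k : ℕ) (j : V) : x k j ≤ b := by
  induction k generalizing j with
  | zero => exact hb j
  | succ k ih => exact (hx k j).2 (Set.forall_mem_image.2 fun i _ => ih i)

theorem le_of_link_of_eq (hx : IsMaxConsensus A x) {k₀ k k₁ : ℕ} (hk₀ : k₀ ≤ k) (hk₁ : k < k₁)
    (hconst : x k₁ = x k₀) {i j : V} (hij : A k j i) : x k₀ i ≤ x k₀ j :=
  calc
    x k₀ i ≤ x k i := hx.monotone hk₀ i
    _ ≤ x (k + 1) j := hx.le_succ_of_link hij
    _ ≤ x k₁ j := hx.monotone hk₁ j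
    _ = x k₀ j := congrFun hconst j

theorem le_of_reflTransGen_of_eq (hx : IsMaxConsensus A x) {k₀ k₁ : ℕ} (hconst : x k₁ = x k₀)
    {i j : V} (hij : Relation.ReflTransGen (fun a b => ∃ k, k₀ ≤ k ∧ k < k₁ ∧ A k b a) i j) :
    x k₀ i ≤ x k₀ j := by
  induction hij with
  | refl => exact le_rfl
  | tail _ hlink ih =>
    obtain ⟨k, hk₀, hk₁, hA⟩ := hlink
    exact ih.trans (hx.le_of_link_of_eq hk₀ hk₁ hconst hA)

end IsMaxConsensus

theorem isLUB_image_sup' {ι α : Type*} [SemilatticeSup α] {s : Finset ι} (hs : s.Nonempty)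
    (f : ι → α) : IsLUB (f '' s) (s.sup' hs f) :=
  ⟨Set.forall_mem_image.2 fun _ hi => Finset.le_sup' f hi,
    fun _ hb => Finset.sup'_le hs f fun _ hi => hb (Set.mem_image_of_mem f hi)⟩

theorem isMaxConsensus_of_eq_sup' {V α : Type*} [Fintype V] [DecidableEq V] [SemilatticeSup α]
    {A : ℕ → V → V → Prop} [∀ k j, DecidablePred (A k j)] {x : ℕ → V → α}
    (hx : ∀ k j, x (k + 1) j =
      (insert j (Finset.univ.filter (A k j))).sup' (Finset.insert_nonempty _ _) (x k)) :
    IsMaxConsensus A x := by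
  intro k j
  rw [hx]
  simpa using isLUB_image_sup' (Finset.insert_nonempty j (Finset.univ.filter (A k j))) (x k)

theorem reflTransGen_of_walk {V : Type*} {r : V → V → Prop} {v : ℕ → V} {p : ℕ}
    (hv : ∀ s, 1 ≤ s → s ≤ p → r (v (s - 1)) (v s)) : Relation.ReflTransGen r (v 0) (v p) :=
  Relation.ReflTransGen.lift v (fun _ _ h => h) 0 p <|
    reflTransGen_of_succ_of_le (fun s t => r (v s) (v t))
      (fun s hs => hv (s + 1) s.succ_pos hs.2) p.zero_le

theorem reflTransGen_of_exists_walk {V : Type*} {r : V → V → Prop}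
    (hconn : ∀ i j : V, i ≠ j → ∃ p, ∃ v : ℕ → V, v 0 = i ∧ v p = j ∧
      ∀ s, 1 ≤ s → s ≤ p → r (v (s - 1)) (v s)) (i j : V) :
    Relation.ReflTransGen r i j := by
  rcases eq_or_ne i j with rfl | hij
  · exact .refl
  · obtain ⟨p, v, rfl, rfl, hv⟩ := hconn i j hij
    exact reflTransGen_of_walk hv

theorem maxCUCL_termination_criterion_sound_general {V α : Type*} [Preorder α]
    {A : ℕ → V → V → Prop} {x : ℕ → V → α} (hx : IsMaxConsensus A x) {k₀ k₁ : ℕ}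
    (hconn : ∀ i j, Relation.ReflTransGen (fun a b => ∃ k, k₀ ≤ k ∧ k < k₁ ∧ A k b a) i j)
    (hconst : x k₁ = x k₀) (j : V) : IsLUB (Set.range (x 0)) (x k₀ j) := by
  constructor
  · rintro _ ⟨i, rfl⟩
    exact (hx.monotone k₀.zero_le i).trans (hx.le_of_reflTransGen_of_eq hconst (hconn i j))
  · exact fun b hb => hx.le_of_forall_initial_le (Set.forall_mem_range.1 hb) k₀ j

/-- Soundness of the MaxCUCL termination criterion: if `E` is
strongly connected and there is a time window `[k₀, k₀ + L)` with `L ≥ 1` during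
which every edge has at least one successful transmission and no node's state
changes, then every node's state at time `k₀` equals `q_m = max_{i ∈ V} x 0 i`. -/
theorem maxCUCL_termination_criterion_sound
    {V : Type*} [Fintype V] [Nonempty V] [DecidableEq V]
    (E : V → V → Prop) [DecidableRel E]
    (w : ℕ → V → V → Bool) (x : ℕ → V → ℝ)
    (hx : ∀ k j, x (k + 1) j =
      ((insert j (Finset.univ.filter fun i => E j i ∧ w k j i = true)).sup'
        (Finset.insert_nonempty _ _) fun i => x k i))
    (hconn : ∀ i j : V, i ≠ j → ∃ p, ∃ v : ℕ → V, v 0 = i ∧ v p = j ∧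
      ∀ s, 1 ≤ s → s ≤ p → E (v s) (v (s - 1)))
    (k₀ L : ℕ) (hL : 1 ≤ L)
    (hsucc : ∀ j i, E j i → ∃ k, k₀ ≤ k ∧ k < k₀ + L ∧ w k j i = true)
    (hconst : ∀ k, k₀ ≤ k → k ≤ k₀ + L → ∀ j, x k j = x k₀ j) :
    ∀ j, x k₀ j = Finset.univ.sup' Finset.univ_nonempty (x 0) := by
  have hlink (a b : V) (hE : E b a) : ∃ k, k₀ ≤ k ∧ k < k₀ + L ∧ E b a ∧ w k b a = true :=
    (hsucc b a hE).imp fun _ ⟨hk₀, hkL, hw⟩ => ⟨hk₀, hkL, hE, hw⟩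
  have hends : x (k₀ + L) = x k₀ := funext (hconst (k₀ + L) (k₀.le_add_right L) le_rfl)
  have hreach (i j : V) : Relation.ReflTransGen
      (fun a b => ∃ k, k₀ ≤ k ∧ k < k₀ + L ∧ E b a ∧ w k b a = true) i j :=
    Relation.ReflTransGen.mono hlink i j (reflTransGen_of_exists_walk hconn i j)
  intro j
  refine (maxCUCL_termination_criterion_sound_general
    (isMaxConsensus_of_eq_sup' hx) hreach hends j).unique ?_
  simpa using isLUB_image_sup' Finset.univ_nonempty (x 0)
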